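/- Let d ≥ 3 and let U = (U_1, …, U_d) be a random vector with each U_i uniformly distributed on (0,1). Then 2 E(max_{1≤i≤d} U_i) ≤ 2 < d = ‖(1,…,1)‖₁; consequently there is no such U with E(max_{1≤i≤d} |x_i| · 2U_i) = Σ_{i=1}^d |x_i| for all x ∈ ℝ^d, i.e. the L¹-norm on ℝ^d with d ≥ 3 cannot be generated by twice a random vector following a copula. -/

import Mathlib

/-!
The maximum of the coordinates of a random vector bounded above by `c` has expectation at most `c`,
whatever the dependence between the coordinates. The L¹-norm of `(1, …, 1)` is the dimension, so a
generator of the L¹-norm cannot have a bound smaller than the dimension; twice a random vector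
following a copula is bounded by `2`.
-/

open MeasureTheory

section DNorm

variable {Ω ι : Type*} [MeasurableSpace Ω] {μ : Measure Ω} {Z : Ω → ι → ℝ} {c : ℝ}

/-- The D-norm `‖x‖_D = E (max_i |x_i| Z_i)` generated by the random vector `Z`. It is defined for
every `Z`, without the requirements `0 ≤ Z_i` and `E Z_i = 1` on a generator. -/
noncomputable def dNorm (μ : Measure Ω) (Z : Ω → ι → ℝ) (x : ι → ℝ) : ℝ :=
  ∫ ω, ⨆ i, |x i| * Z ω i ∂μ

theorem dNorm_one : dNorm μ Z 1 = ∫ ω, ⨆ i, Z ω i ∂μ := by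
  simp [dNorm]

theorem dNorm_const_mul (hc : 0 ≤ c) (x : ι → ℝ) :
    dNorm μ (fun ω i => c * Z ω i) x = c * dNorm μ Z x := by
  simp only [dNorm, mul_left_comm _ c, ← Real.mul_iSup_of_nonneg hc, integral_const_mul]

theorem integrable_iSup [Finite ι] (hZ : ∀ i, Integrable (fun ω => Z ω i) μ) :
    Integrable (fun ω => ⨆ i, Z ω i) μ := by
  cases nonempty_fintype ι
  cases isEmpty_or_nonempty ι with
  | inl _ => simp
  | inr _ =>
    have hsup : Integrable (Finset.univ.sup' Finset.univ_nonempty fun i ω => Z ω i) μ :=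
      Finset.sup'_induction (p := (Integrable · μ)) _ _ (fun _ hf _ hg => hf.sup hg)
        fun i _ => hZ i
    simpa only [funext (Finset.sup'_apply _ _), Finset.sup'_univ_eq_ciSup] using hsup

theorem dNorm_le_mul_norm [Fintype ι] [IsProbabilityMeasure μ] (hc : 0 ≤ c)
    (hZ : ∀ i, Integrable (fun ω => Z ω i) μ) (hZc : ∀ i, ∀ᵐ ω ∂μ, Z ω i ≤ c) (x : ι → ℝ) :
    dNorm μ Z x ≤ c * ‖x‖ := by
  have hbound : ∀ᵐ ω ∂μ, ⨆ i, |x i| * Z ω i ≤ c * ‖x‖ := by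
    filter_upwards [ae_all_iff.2 hZc] with ω hω
    refine Real.iSup_le (fun i => ?_) (by positivity)
    calc |x i| * Z ω i ≤ |x i| * c := by gcongr; exact hω i
      _ ≤ ‖x‖ * c := by gcongr; exact norm_le_pi_norm x i
      _ = c * ‖x‖ := mul_comm _ _
  calc dNorm μ Z x ≤ ∫ _, c * ‖x‖ ∂μ :=
        integral_mono_ae (integrable_iSup fun i => (hZ i).const_mul |x i|)
          (integrable_const _) hbound
    _ = c * ‖x‖ := by simp

end DNorm

theorem ae_mem_of_map_eq_restrict {α β : Type*} [MeasurableSpace α] [MeasurableSpace β]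
    {μ : Measure α} {ν : Measure β} {f : α → β} {s : Set β} (hf : AEMeasurable f μ)
    (hs : MeasurableSet s) (hmap : μ.map f = ν.restrict s) : ∀ᵐ a ∂μ, f a ∈ s :=
  ae_of_ae_map hf (hmap ▸ ae_restrict_mem hs)

theorem l1_not_generated_by_copula_high_dim_general {ι : Type*} [Fintype ι]
    {Ω : Type*} [MeasurableSpace Ω] {μ : Measure Ω} [IsProbabilityMeasure μ]
    {U : Ω → ι → ℝ} (hU : ∀ i, Integrable (fun ω => U ω i) μ) (hU1 : ∀ i, ∀ᵐ ω ∂μ, U ω i ≤ 1)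
    {c : ℝ} (hc : 0 ≤ c) (hcard : c < Fintype.card ι) :
    (c * ∫ ω, ⨆ i, U ω i ∂μ) ≤ c ∧
      ¬ ∀ x : ι → ℝ, dNorm μ (fun ω i => c * U ω i) x = ∑ i, |x i| := by
  have hmax : c * dNorm μ U 1 ≤ c := by
    refine mul_le_of_le_one_right hc ?_
    calc dNorm μ U 1 ≤ 1 * ‖(1 : ι → ℝ)‖ := dNorm_le_mul_norm zero_le_one hU hU1 1
      _ ≤ 1 := by rw [one_mul]; exact (pi_norm_const_le (1 : ℝ)).trans_eq norm_one
  refine ⟨dNorm_one (Z := U) ▸ hmax, fun hl1 => hcard.not_ge ?_⟩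
  calc (Fintype.card ι : ℝ) = ∑ i : ι, |(1 : ι → ℝ) i| := by simp
    _ = c * dNorm μ U 1 := by rw [← hl1, dNorm_const_mul hc]
    _ ≤ c := hmax

/-- For `d ≥ 3`, the L¹-norm on `ℝ^d` cannot be generated by twice a random vector
following a copula. -/
theorem l1_not_generated_by_copula_high_dim {d : ℕ} (hd : 3 ≤ d)
    {Ω : Type*} [MeasurableSpace Ω] (μ : Measure Ω) [IsProbabilityMeasure μ]
    (U : Ω → Fin d → ℝ) (hUm : Measurable U)
    (hU : ∀ i, μ.map (fun ω => U ω i) = volume.restrict (Set.Ioo (0 : ℝ) 1)) :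
    (2 * ∫ ω, ⨆ i, U ω i ∂μ) ≤ 2 ∧ (2 : ℝ) < d ∧
    ((d : ℝ) = ∑ _i : Fin d, |(1 : ℝ)|) ∧
    ¬ ∀ x : Fin d → ℝ, (∫ ω, ⨆ i, |x i| * (2 * U ω i) ∂μ) = ∑ i, |x i| := by
  have hUi (i) : AEMeasurable (fun ω => U ω i) μ := (measurable_pi_iff.1 hUm i).aemeasurable
  have hU01 (i) : ∀ᵐ ω ∂μ, U ω i ∈ Set.Ioo 0 1 :=
    ae_mem_of_map_eq_restrict (hUi i) measurableSet_Ioo (hU i)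
  have hd2 : (2 : ℝ) < d := by exact_mod_cast hd
  obtain ⟨hmax, hl1⟩ := l1_not_generated_by_copula_high_dim_general
    (fun i => .of_mem_Icc 0 1 (hUi i) ((hU01 i).mono fun _ h => Set.Ioo_subset_Icc_self h))
    (fun i => (hU01 i).mono fun _ h => h.2.le) zero_le_two (by simpa using hd2)
  exact ⟨hmax, hd2, by simp, hl1⟩
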